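/- Fix integers 1 ≤ p ≤ n, k ≥ 1 and N ≥ n, and set sym^{≤k}(p) = Σ_{i=1}^k dim Sym^i ℂ^p. Then: (i) for every γ ∈ J_k^{reg}(p,n), the set S_γ = {Ψ ∈ J_k(n,N) : Ψ ∘ γ = 0} is a linear subspace of J_k(n,N) of codimension N·sym^{≤k}(p); (ii) for every γ ∈ J_k^{reg}(p,n), the subset S_γ ∩ J_k^o(n,N) is dense in S_γ; (iii) if Ψ ∈ J_k^o(n,N) and γ_1, γ_2 ∈ J_k^{reg}(p,n) satisfy Ψ ∘ γ_1 = Ψ ∘ γ_2 = 0, then there exists φ ∈ J_k^{reg}(p,p) such that γ_1 = γ_2 ∘ φ; (iv) for γ_1, γ_2 ∈ J_k^{reg}(p,n), S_{γ_1} = S_{γ_2} if and only if there exists φ ∈ J_k^{reg}(p,p) with γ_1 = γ_2 ∘ φ. -/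

import Mathlib

open scoped BigOperators

namespace JetPaper

/-- Monomials in `u` variables of degree between `1` and `k`:
these index a basis of `⊕_{j=1}^k Sym^j ℂ^u`. -/
def Mon (u k : ℕ) : Type := {m : Fin u → ℕ // 0 < ∑ i, m i ∧ ∑ i, m i ≤ k}

noncomputable instance (u k : ℕ) : Fintype (Mon u k) :=
  Fintype.ofInjective
    (fun m : Mon u k => (fun i => (⟨m.1 i, Nat.lt_succ_of_le
        ((Finset.single_le_sum (fun _ _ => Nat.zero_le _) (Finset.mem_univ i)).trans
          m.2.2)⟩ : Fin (k + 1))))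
    (fun m m' h => Subtype.ext (funext fun i => congrArg Fin.val (congrFun h i)))

/-- The space `J_k(u,v)` of `k`-jets at the origin of holomorphic maps `(ℂ^u,0) → (ℂ^v,0)`,
described by the coefficients (indexed by monomials of degree `1,…,k` in `u` variables)
of the `v` coordinate polynomials. -/
abbrev Jet (k u v : ℕ) : Type := Fin v → Mon u k → ℂ

/-- The tuple of coordinate polynomials of a jet. -/
noncomputable def toPoly {k u v : ℕ} (γ : Jet k u v) : Fin v → MvPolynomial (Fin u) ℂ :=
  fun i => ∑ m : Mon u k, MvPolynomial.monomial (Finsupp.equivFunOnFinite.symm m.1) (γ i m)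

/-- Composition of jets `Ψ ∘ γ`: substitution of the coordinate polynomials of `γ` into
those of `Ψ`, followed by deletion of all terms of degree greater than `k`
(only the coefficients of monomials of degree `1,…,k` are recorded). -/
noncomputable def jetComp {k u v w : ℕ} (Ψ : Jet k v w) (γ : Jet k u v) : Jet k u w :=
  fun i m => MvPolynomial.coeff (Finsupp.equivFunOnFinite.symm m.1)
    (MvPolynomial.aeval (toPoly γ) (toPoly Ψ i))

/-- The linear part of a jet, as a matrix. -/
noncomputable def linPart {k u v : ℕ} (γ : Jet k u v) : Matrix (Fin v) (Fin u) ℂ :=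
  fun i j => MvPolynomial.coeff (Finsupp.single j 1) (toPoly γ i)

/-- The dimension of the kernel of the linear part of a jet. -/
noncomputable def kerDim {k n N : ℕ} (Ψ : Jet k n N) : ℕ :=
  Module.finrank ℂ (LinearMap.ker (Matrix.mulVecLin (linPart Ψ)))

/-- `γ ∈ J_k^{reg}(p,n)`: the linear part `Γ₁ ∈ Hom(ℂ^p, ℂ^n)` has rank `p`. -/
def JetReg (k p n : ℕ) : Set (Jet k p n) := {γ | (linPart γ).rank = p}

/-- `sym^{≤k}(p) = ∑_{i=1}^k dim Sym^i ℂ^p`. -/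
def symLe (p k : ℕ) : ℕ := ∑ i ∈ Finset.Icc 1 k, Nat.choose (p + i - 1) (p - 1)

/-!
Modulo terms of degree `> k`, composition of jets is composition of polynomial maps, and
precomposition `Ψ ↦ Ψ ∘ α` is linear. If `α` is tangent to the identity, then `f ∘ α` and `f` have
the same terms of lowest order, so precomposition with `α` is injective, hence bijective. Since
regular jets become tangent to the identity after a linear projection, they are exactly the jets
`γ` with a left inverse `L`.

* Codimension: `Φ ↦ Φ ∘ L` is a right inverse of `Ψ ↦ Ψ ∘ γ`, whose kernel is `S_γ`.
* Density: every linear map `A` killing the image of `Γ₁` is the linear part of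
  `A - A ∘ γ ∘ L ∈ S_γ`. Perturbing in the direction of such a jet with `ker A = im Γ₁` makes the
  kernel of the linear part as small as possible, except for finitely many parameters.
* Uniqueness: if `Ψ ∘ γ₁ = Ψ ∘ γ₂ = 0` and `ker Ψ' = im γ₂'`, choose `C` linear such that
  `G = C ∘ Ψ + γ₂ ∘ L₂` is tangent to the identity. Then `G ∘ γ₁ = γ₂ ∘ L₂ ∘ γ₁ = G ∘ γ₂ ∘ L₂ ∘ γ₁`,
  and `G` can be cancelled.
-/

section IdealOfVars

open MvPolynomial

section CommSemiring

variable {σ τ R : Type*} [CommSemiring R]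

lemma mem_idealOfVars_iff_coeff_zero {f : MvPolynomial σ R} :
    f ∈ idealOfVars σ R ↔ coeff 0 f = 0 := by
  rw [← pow_one (idealOfVars σ R), mem_pow_idealOfVars_iff']
  simp [Finsupp.degree_eq_zero_iff]

lemma mem_idealOfVars_sq_iff {f : MvPolynomial σ R} :
    f ∈ idealOfVars σ R ^ 2 ↔ coeff 0 f = 0 ∧ ∀ i, coeff (Finsupp.single i 1) f = 0 := by
  have degree_eq_one_iff (d : σ →₀ ℕ) : d.degree = 1 ↔ ∃ i, Finsupp.single i 1 = d :=
    (Set.ext_iff.1 Finsupp.range_single_one d).symm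
  simp only [mem_pow_idealOfVars_iff', Nat.lt_succ_iff, Nat.le_one_iff_eq_zero_or_eq_one,
    Finsupp.degree_eq_zero_iff, degree_eq_one_iff]
  constructor
  · exact fun h => ⟨h 0 (.inl rfl), fun i => h _ (.inr ⟨i, rfl⟩)⟩
  · rintro ⟨h₀, h₁⟩ d (rfl | ⟨i, rfl⟩)
    exacts [h₀, h₁ i]

lemma aeval_mem_idealOfVars_pow {a : σ → MvPolynomial τ R} (ha : ∀ i, a i ∈ idealOfVars τ R)
    {d : ℕ} {f : MvPolynomial σ R} (hf : f ∈ idealOfVars σ R ^ d) :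
    aeval a f ∈ idealOfVars τ R ^ d := by
  have map_le : (idealOfVars σ R).map (aeval (R := R) a) ≤ idealOfVars τ R := by
    rw [Ideal.map_span, Ideal.span_le]
    rintro _ ⟨_, ⟨i, rfl⟩, rfl⟩
    simpa using ha i
  refine Ideal.pow_right_mono map_le d ?_
  rw [← Ideal.map_pow]
  exact Ideal.mem_map_of_mem _ hf

lemma aeval_mem_idealOfVars {a : σ → MvPolynomial τ R} (ha : ∀ i, a i ∈ idealOfVars τ R)
    {f : MvPolynomial σ R} (hf : f ∈ idealOfVars σ R) : aeval a f ∈ idealOfVars τ R := by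
  simpa only [pow_one] using aeval_mem_idealOfVars_pow (d := 1) ha (by simpa only [pow_one])

end CommSemiring

variable {σ τ R : Type*} [CommRing R]

lemma aeval_sub_aeval_mem {I : Ideal (MvPolynomial τ R)} {a b : σ → MvPolynomial τ R}
    (h : ∀ i, a i - b i ∈ I) (f : MvPolynomial σ R) : aeval a f - aeval b f ∈ I := by
  have mk_comp_eq : (Ideal.Quotient.mkₐ R I).comp (aeval a) =
      (Ideal.Quotient.mkₐ R I).comp (aeval b) := by
    ext i
    simpa [Ideal.Quotient.eq] using h i
  exact Ideal.Quotient.eq.1 (DFunLike.congr_fun mk_comp_eq f)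

lemma aeval_sub_self_mem_idealOfVars_pow {a : σ → MvPolynomial σ R}
    (h : ∀ i, a i - X i ∈ idealOfVars σ R ^ 2) {d : ℕ} {f : MvPolynomial σ R}
    (hf : f ∈ idealOfVars σ R ^ d) : aeval a f - f ∈ idealOfVars σ R ^ (d + 1) := by
  have aeval_sub_mem_sq (g : MvPolynomial σ R) : aeval a g - g ∈ idealOfVars σ R ^ 2 := by
    simpa using aeval_sub_aeval_mem h g
  have ha (i : σ) : a i ∈ idealOfVars σ R := by
    simpa using Ideal.add_mem _ (Ideal.pow_le_self two_ne_zero (h i))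
      (Ideal.subset_span (Set.mem_range_self i))
  induction d generalizing f with
  | zero => exact Ideal.pow_le_pow_right one_le_two (aeval_sub_mem_sq f)
  | succ d ih =>
    rw [pow_succ] at hf
    induction hf using Submodule.mul_induction_on' with
    | mem_mul_mem x hx y _ =>
      have telescope : aeval a (x * y) - x * y =
          aeval a x * (aeval a y - y) + (aeval a x - x) * y := by
        rw [map_mul]; ring
      rw [telescope]
      refine Ideal.add_mem _ ?_ ?_
      · rw [add_assoc, pow_add]
        exact Ideal.mul_mem_mul (aeval_mem_idealOfVars_pow ha hx) (aeval_sub_mem_sq y)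
      · rw [pow_succ]
        exact Ideal.mul_mem_mul (ih hx) ‹_›
    | add x _ y _ hx hy =>
      rw [map_add, add_sub_add_comm]
      exact Ideal.add_mem _ hx hy

lemma coeff_single_aeval [Fintype σ] {a : σ → MvPolynomial τ R}
    (ha : ∀ i, a i ∈ idealOfVars τ R) (f : MvPolynomial σ R) (j : τ) :
    coeff (Finsupp.single j 1) (aeval a f) =
      ∑ i, coeff (Finsupp.single i 1) f * coeff (Finsupp.single j 1) (a i) := by
  classical
  set ℓ : MvPolynomial σ R := C (coeff 0 f) + ∑ i, C (coeff (Finsupp.single i 1) f) * X i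
    with hℓ
  have sub_mem : f - ℓ ∈ idealOfVars σ R ^ 2 := by
    simp [mem_idealOfVars_sq_iff, ℓ, coeff_sum, coeff_C_mul, coeff_X, coeff_C,
      Finsupp.single_left_inj, eq_comm (a := (0 : σ →₀ ℕ))]
  have coeff_eq := (mem_idealOfVars_sq_iff.1 (aeval_mem_idealOfVars_pow ha sub_mem)).2 j
  rw [map_sub, coeff_sub, sub_eq_zero] at coeff_eq
  rw [coeff_eq, hℓ]
  simp [coeff_sum, coeff_C_mul, coeff_C, algebraMap_eq, eq_comm (a := (0 : τ →₀ ℕ))]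

end IdealOfVars

section LinearAlgebra

open Module

variable {K V W W' : Type*} [Field K] [AddCommGroup V] [Module K V] [AddCommGroup W] [Module K W]
  [AddCommGroup W'] [Module K W']

lemma exists_comp_eq_of_ker_le_ker {f : V →ₗ[K] W} {g : V →ₗ[K] W'}
    (h : LinearMap.ker f ≤ LinearMap.ker g) : ∃ c : W →ₗ[K] W', c ∘ₗ f = g := by
  obtain ⟨c, hc⟩ := ((LinearMap.ker f).liftQ g h ∘ₗ
    f.quotKerEquivRange.symm.toLinearMap).exists_extend
  refine ⟨c, LinearMap.ext fun x => ?_⟩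
  simpa using LinearMap.congr_fun hc (f.quotKerEquivRange (Submodule.Quotient.mk x))

lemma exists_ker_eq [FiniteDimensional K V] [FiniteDimensional K W] (U : Submodule K V)
    (h : finrank K V ≤ finrank K W + finrank K U) : ∃ f : V →ₗ[K] W, LinearMap.ker f = U := by
  have finrank_quot_le : finrank K (V ⧸ U) ≤ finrank K W := by
    have := U.finrank_quotient_add_finrank
    omega
  obtain ⟨g, hg⟩ := finrank_le_iff_exists_linearMap.1 finrank_quot_le
  exact ⟨g ∘ₗ U.mkQ, by
    rw [LinearMap.ker_comp, LinearMap.ker_eq_bot.2 hg, Submodule.comap_bot, U.ker_mkQ]⟩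

/- On a complement `U` of `ker g`, the map `g` has a left inverse `b`, and `b ∘ (f + t • g)` is
`b ∘ f + t` on `U`: it is injective unless `-t` is an eigenvalue of `b ∘ f`. -/
lemma finite_setOf_finrank_range_add_smul_lt [FiniteDimensional K V] (f g : V →ₗ[K] W) :
    {t : K | finrank K (LinearMap.range (f + t • g)) < finrank K (LinearMap.range g)}.Finite := by
  obtain ⟨U, hU⟩ := (LinearMap.ker g).exists_isCompl
  obtain ⟨b, hb⟩ := (g ∘ₗ U.subtype).exists_leftInverse_of_injective (by
    rw [LinearMap.ker_comp]
    exact Submodule.disjoint_iff_comap_eq_bot.1 hU.disjoint.symm)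
  have finrank_U : finrank K U = finrank K (LinearMap.range g) := by
    have h₁ := Submodule.finrank_add_eq_of_isCompl hU
    have h₂ := g.finrank_range_add_finrank_ker
    omega
  refine ((End.finite_hasEigenvalue (b ∘ₗ f ∘ₗ U.subtype)).preimage
    (f := Neg.neg) neg_injective.injOn).subset fun t ht => ?_
  by_contra not_hasEigenvalue
  have comp_eq : b ∘ₗ (f + t • g) ∘ₗ U.subtype =
      b ∘ₗ f ∘ₗ U.subtype - (-t) • (1 : End K U) := by
    ext x
    have b_g_eq : b (g x) = x := LinearMap.congr_fun hb x
    simp [b_g_eq]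
  have ker_eq_bot : LinearMap.ker (b ∘ₗ (f + t • g) ∘ₗ U.subtype) = ⊥ := by
    rw [comp_eq, ← End.eigenspace_def]
    exact not_not.1 not_hasEigenvalue
  have finrank_U_le : finrank K U ≤ finrank K (LinearMap.range (f + t • g)) := by
    rw [← LinearMap.finrank_range_of_inj
      (LinearMap.ker_eq_bot.1 (eq_bot_mono (LinearMap.ker_le_ker_comp _ b) ker_eq_bot))]
    exact Submodule.finrank_mono (LinearMap.range_comp_le_range _ _)
  exact (finrank_U ▸ finrank_U_le).not_gt ht

variable {l m n : Type*} [Fintype l] [Fintype n]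

lemma exists_matrix_mul_eq_of_ker_le_ker {A : Matrix l n K} {B : Matrix m n K}
    (h : LinearMap.ker A.mulVecLin ≤ LinearMap.ker B.mulVecLin) :
    ∃ C : Matrix m l K, C * A = B := by
  classical
  obtain ⟨c, hc⟩ := exists_comp_eq_of_ker_le_ker h
  refine ⟨LinearMap.toMatrix' c, Matrix.toLin'.injective ?_⟩
  rw [Matrix.toLin'_mul, Matrix.toLin'_toMatrix']
  exact hc

lemma exists_matrix_mul_eq_one [DecidableEq n] {A : Matrix l n K} (h : A.rank = Fintype.card n) :
    ∃ C : Matrix n l K, C * A = 1 := by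
  have ker_eq_bot : LinearMap.ker A.mulVecLin = ⊥ := by
    have := A.mulVecLin.finrank_range_add_finrank_ker
    rw [finrank_fintype_fun_eq_card, ← Matrix.rank, h] at this
    exact Submodule.finrank_eq_zero.1 (by omega)
  exact exists_matrix_mul_eq_of_ker_le_ker (by rw [ker_eq_bot]; exact bot_le)

lemma exists_matrix_mul_eq_zero_and_rank_add_rank_eq [Fintype m] (B : Matrix n m K)
    (h : Fintype.card n ≤ Fintype.card l + B.rank) :
    ∃ A : Matrix l n K, A * B = 0 ∧ A.rank + B.rank = Fintype.card n := by
  classical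
  obtain ⟨f, hf⟩ := exists_ker_eq (W := l → K) (LinearMap.range B.mulVecLin)
    (by simpa only [finrank_fintype_fun_eq_card, Matrix.rank] using h)
  refine ⟨LinearMap.toMatrix' f, Matrix.toLin'.injective ?_, ?_⟩
  · rw [Matrix.toLin'_mul, Matrix.toLin'_toMatrix', map_zero]
    exact LinearMap.range_le_ker_iff.1 hf.ge
  · have := f.finrank_range_add_finrank_ker
    rwa [hf, finrank_fintype_fun_eq_card, ← Matrix.toLin'_toMatrix' f] at this

lemma finite_setOf_rank_add_smul_lt (A B : Matrix m n K) :
    {t : K | (A + t • B).rank < B.rank}.Finite := by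
  have mulVecLin_add_smul (t : K) :
      (A + t • B).mulVecLin = A.mulVecLin + t • B.mulVecLin := by
    ext1 x
    simp
  refine (finite_setOf_finrank_range_add_smul_lt A.mulVecLin B.mulVecLin).subset fun t ht => ?_
  rw [Set.mem_ofPred_eq, ← mulVecLin_add_smul]
  exact ht

end LinearAlgebra

section JetAlgebra

open MvPolynomial

variable {k t u v w : ℕ}

/-- The `k`-jet at the origin of a polynomial map; its constant term is ignored. -/
noncomputable def jetOfPoly (k : ℕ) (f : Fin v → MvPolynomial (Fin u) ℂ) : Jet k u v :=
  fun i m => coeff (Finsupp.equivFunOnFinite.symm m.1) (f i)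

lemma jetOfPoly_toPoly (γ : Jet k u v) : jetOfPoly k (toPoly γ) = γ := by
  classical
  funext i m
  have monomial_eq_iff (m' : Mon u k) :
      Finsupp.equivFunOnFinite.symm m'.1 = Finsupp.equivFunOnFinite.symm m.1 ↔ m' = m :=
    Finsupp.equivFunOnFinite.symm.injective.eq_iff.trans Subtype.ext_iff.symm
  simp [jetOfPoly, toPoly, coeff_sum, coeff_monomial, monomial_eq_iff]

lemma degree_equivFunOnFinite_symm (m : Fin u → ℕ) :
    (Finsupp.equivFunOnFinite.symm m).degree = ∑ i, m i :=
  Finsupp.degree_eq_sum _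

lemma toPoly_mem_idealOfVars (γ : Jet k u v) (i : Fin v) :
    toPoly γ i ∈ idealOfVars (Fin u) ℂ := by
  classical
  refine Ideal.sum_mem _ fun m _ => mem_idealOfVars_iff_coeff_zero.2 ?_
  rw [coeff_monomial, if_neg]
  intro h
  have := degree_equivFunOnFinite_symm m.1
  rw [h, map_zero] at this
  exact m.2.1.ne this

lemma jetOfPoly_eq_iff {f g : Fin v → MvPolynomial (Fin u) ℂ}
    (hf : ∀ i, f i ∈ idealOfVars (Fin u) ℂ) (hg : ∀ i, g i ∈ idealOfVars (Fin u) ℂ) :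
    jetOfPoly k f = jetOfPoly k g ↔ ∀ i, f i - g i ∈ idealOfVars (Fin u) ℂ ^ (k + 1) := by
  simp only [mem_pow_idealOfVars_iff', coeff_sub, sub_eq_zero, funext_iff]
  refine forall_congr' fun i => ⟨fun h d hd => ?_, fun h m => h _ ?_⟩
  · rcases Nat.eq_zero_or_pos d.degree with hd₀ | hd₀
    · rw [(Finsupp.degree_eq_zero_iff d).1 hd₀, mem_idealOfVars_iff_coeff_zero.1 (hf i),
        mem_idealOfVars_iff_coeff_zero.1 (hg i)]
    · rw [Finsupp.degree_eq_sum] at hd hd₀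
      simpa [jetOfPoly] using h ⟨d, hd₀, Nat.le_of_lt_succ hd⟩
  · rw [degree_equivFunOnFinite_symm]
    exact Nat.lt_succ_of_le m.2.2

lemma toPoly_jetOfPoly_sub_mem {f : Fin v → MvPolynomial (Fin u) ℂ}
    (hf : ∀ i, f i ∈ idealOfVars (Fin u) ℂ) (i : Fin v) :
    toPoly (jetOfPoly k f) i - f i ∈ idealOfVars (Fin u) ℂ ^ (k + 1) :=
  (jetOfPoly_eq_iff (toPoly_mem_idealOfVars _) hf).1 (jetOfPoly_toPoly _) i

lemma jetComp_jetOfPoly {f : Fin w → MvPolynomial (Fin v) ℂ} {g : Fin v → MvPolynomial (Fin u) ℂ}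
    (hf : ∀ i, f i ∈ idealOfVars (Fin v) ℂ) (hg : ∀ i, g i ∈ idealOfVars (Fin u) ℂ) :
    jetComp (jetOfPoly k f) (jetOfPoly k g) = jetOfPoly k fun i => aeval g (f i) := by
  refine (jetOfPoly_eq_iff
    (fun i => aeval_mem_idealOfVars (toPoly_mem_idealOfVars _) (toPoly_mem_idealOfVars _ i))
    (fun i => aeval_mem_idealOfVars hg (hf i))).2 fun i => ?_
  have outer := aeval_mem_idealOfVars_pow (toPoly_mem_idealOfVars (jetOfPoly k g))
    (toPoly_jetOfPoly_sub_mem (k := k) hf i)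
  have inner := aeval_sub_aeval_mem (toPoly_jetOfPoly_sub_mem (k := k) hg) (f i)
  rw [map_sub] at outer
  simpa using Ideal.add_mem _ outer inner

lemma jetComp_assoc (Ψ : Jet k v w) (γ : Jet k u v) (φ : Jet k t u) :
    jetComp (jetComp Ψ γ) φ = jetComp Ψ (jetComp γ φ) := by
  have aeval_mem {t u v : ℕ} (β : Jet k u v) (α : Jet k t u) (i : Fin v) :
      aeval (toPoly α) (toPoly β i) ∈ idealOfVars (Fin t) ℂ :=
    aeval_mem_idealOfVars (toPoly_mem_idealOfVars α) (toPoly_mem_idealOfVars β i)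
  calc jetComp (jetComp Ψ γ) φ
      = jetComp (jetOfPoly k fun i => aeval (toPoly γ) (toPoly Ψ i)) (jetOfPoly k (toPoly φ)) := by
        rw [jetOfPoly_toPoly]; rfl
    _ = jetOfPoly k fun i => aeval (toPoly φ) (aeval (toPoly γ) (toPoly Ψ i)) :=
        jetComp_jetOfPoly (aeval_mem Ψ γ) (toPoly_mem_idealOfVars φ)
    _ = jetOfPoly k fun i => aeval (fun j => aeval (toPoly φ) (toPoly γ j)) (toPoly Ψ i) := by
        simp only [← AlgHom.comp_apply, comp_aeval]
    _ = jetComp (jetOfPoly k (toPoly Ψ)) (jetComp γ φ) :=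
        (jetComp_jetOfPoly (toPoly_mem_idealOfVars Ψ) (aeval_mem γ φ)).symm
    _ = jetComp Ψ (jetComp γ φ) := by rw [jetOfPoly_toPoly]

/-- The jet of the identity map, the unit of composition of jets. -/
noncomputable def idJet (k u : ℕ) : Jet k u u := jetOfPoly k X

lemma X_mem_idealOfVars (i : Fin u) : (X i : MvPolynomial (Fin u) ℂ) ∈ idealOfVars (Fin u) ℂ :=
  Ideal.subset_span (Set.mem_range_self i)

lemma idJet_jetComp (γ : Jet k u v) : jetComp (idJet k v) γ = γ := by
  calc jetComp (idJet k v) γ = jetComp (jetOfPoly k X) (jetOfPoly k (toPoly γ)) := by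
        rw [jetOfPoly_toPoly]; rfl
    _ = γ := by
        rw [jetComp_jetOfPoly X_mem_idealOfVars (toPoly_mem_idealOfVars γ)]
        simp only [aeval_X, jetOfPoly_toPoly]

lemma jetComp_idJet (γ : Jet k u v) : jetComp γ (idJet k u) = γ := by
  calc jetComp γ (idJet k u) = jetComp (jetOfPoly k (toPoly γ)) (jetOfPoly k X) := by
        rw [jetOfPoly_toPoly]; rfl
    _ = γ := by
        rw [jetComp_jetOfPoly (toPoly_mem_idealOfVars γ) X_mem_idealOfVars]
        simp only [aeval_X_left_apply, jetOfPoly_toPoly]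

lemma toPoly_add (γ γ' : Jet k u v) : toPoly (γ + γ') = toPoly γ + toPoly γ' := by
  funext i
  simp [toPoly, Finset.sum_add_distrib]

lemma toPoly_smul (c : ℂ) (γ : Jet k u v) : toPoly (c • γ) = c • toPoly γ := by
  funext i
  simp [toPoly, Finset.smul_sum, smul_monomial]

/-- Precomposition `Ψ ↦ Ψ ∘ γ` with a fixed jet, as a linear map. -/
noncomputable def precomp (w : ℕ) (γ : Jet k u v) : Jet k v w →ₗ[ℂ] Jet k u w where
  toFun Ψ := jetComp Ψ γ
  map_add' Ψ Ψ' := by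
    funext i m
    simp [jetComp, toPoly_add]
  map_smul' c Ψ := by
    funext i m
    simp [jetComp, toPoly_smul]

lemma precomp_apply (γ : Jet k u v) (Ψ : Jet k v w) : precomp w γ Ψ = jetComp Ψ γ := rfl

lemma jetComp_zero (Ψ : Jet k v w) : jetComp Ψ (0 : Jet k u v) = 0 := by
  have toPoly_zero : toPoly (0 : Jet k u v) = 0 := by
    simpa only [zero_smul] using toPoly_smul 0 (0 : Jet k u v)
  have aeval_zero_eq (i : Fin w) :
      aeval (0 : Fin v → MvPolynomial (Fin u) ℂ) (toPoly Ψ i) = 0 := by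
    rw [aeval_zero, constantCoeff_eq, mem_idealOfVars_iff_coeff_zero.1 (toPoly_mem_idealOfVars Ψ i),
      map_zero]
  funext i m
  rw [jetComp, toPoly_zero, aeval_zero_eq]
  rfl

lemma add_jetComp (Ψ Ψ' : Jet k v w) (γ : Jet k u v) :
    jetComp (Ψ + Ψ') γ = jetComp Ψ γ + jetComp Ψ' γ :=
  (precomp w γ).map_add Ψ Ψ'

lemma sub_jetComp (Ψ Ψ' : Jet k v w) (γ : Jet k u v) :
    jetComp (Ψ - Ψ') γ = jetComp Ψ γ - jetComp Ψ' γ :=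
  (precomp w γ).map_sub Ψ Ψ'

end JetAlgebra

section LinearPart

open MvPolynomial

variable {k u v w : ℕ}

lemma linPart_add (γ γ' : Jet k u v) : linPart (γ + γ') = linPart γ + linPart γ' := by
  ext i j
  simp [linPart, toPoly_add]

lemma linPart_smul (c : ℂ) (γ : Jet k u v) : linPart (c • γ) = c • linPart γ := by
  ext i j
  simp [linPart, toPoly_smul]

lemma linPart_sub (γ γ' : Jet k u v) : linPart (γ - γ') = linPart γ - linPart γ' := by
  rw [eq_sub_iff_add_eq, ← linPart_add, sub_add_cancel]

lemma linPart_zero : linPart (0 : Jet k u v) = 0 := by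
  simpa using linPart_sub (0 : Jet k u v) 0

lemma linPart_jetOfPoly (hk : 1 ≤ k) (f : Fin v → MvPolynomial (Fin u) ℂ) (i : Fin v)
    (j : Fin u) : linPart (jetOfPoly k f) i j = coeff (Finsupp.single j 1) (f i) := by
  have sum_single : ∑ l, Finsupp.single j 1 l = 1 := by
    rw [← Finsupp.degree_eq_sum, Finsupp.degree_single]
  let m : Mon u k := ⟨Finsupp.single j 1, by rw [sum_single]; exact ⟨one_pos, hk⟩⟩
  have hm : Finsupp.equivFunOnFinite.symm m.1 = Finsupp.single j 1 :=
    Finsupp.equivFunOnFinite_symm_coe _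
  have := congrFun (congrFun (jetOfPoly_toPoly (jetOfPoly k f)) i) m
  rwa [jetOfPoly, jetOfPoly, hm] at this

lemma linPart_jetComp (hk : 1 ≤ k) (Ψ : Jet k v w) (γ : Jet k u v) :
    linPart (jetComp Ψ γ) = linPart Ψ * linPart γ := by
  ext i j
  exact (linPart_jetOfPoly hk _ i j).trans
    (coeff_single_aeval (toPoly_mem_idealOfVars γ) (toPoly Ψ i) j)

lemma linPart_idJet (hk : 1 ≤ k) : linPart (idJet k u) = 1 := by
  classical
  ext i j
  rw [idJet, linPart_jetOfPoly hk]
  simp [coeff_X, Matrix.one_apply, Finsupp.single_left_inj]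

/-- The jet of the linear map `x ↦ A x`. -/
noncomputable def linJet (k : ℕ) (A : Matrix (Fin v) (Fin u) ℂ) : Jet k u v :=
  jetOfPoly k fun i => ∑ j, C (A i j) * X j

lemma linPart_linJet (hk : 1 ≤ k) (A : Matrix (Fin v) (Fin u) ℂ) : linPart (linJet k A) = A := by
  classical
  ext i j
  rw [linJet, linPart_jetOfPoly hk]
  simp [coeff_sum, coeff_C_mul, coeff_X, Finsupp.single_left_inj]

lemma toPoly_sub_X_mem_of_linPart_eq_one {α : Jet k u u} (hα : linPart α = 1) (i : Fin u) :
    toPoly α i - X i ∈ idealOfVars (Fin u) ℂ ^ 2 := by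
  classical
  refine mem_idealOfVars_sq_iff.2 ⟨?_, fun j => ?_⟩
  · simp [mem_idealOfVars_iff_coeff_zero.1 (toPoly_mem_idealOfVars α i)]
  · have coeff_eq : coeff (Finsupp.single j 1) (toPoly α i) = (1 : Matrix _ _ ℂ) i j := by
      rw [← hα]; rfl
    simp [coeff_eq, coeff_X, Matrix.one_apply, Finsupp.single_left_inj]

lemma precomp_injective_of_linPart_eq_one {α : Jet k u u} (hα : linPart α = 1) :
    Function.Injective (precomp w α) := by
  refine (injective_iff_map_eq_zero _).2 fun Ψ hΨ => ?_
  have aeval_mem (i : Fin w) :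
      aeval (toPoly α) (toPoly Ψ i) ∈ idealOfVars (Fin u) ℂ ^ (k + 1) := by
    simpa using (jetOfPoly_eq_iff (g := 0) (fun i => aeval_mem_idealOfVars
      (toPoly_mem_idealOfVars α) (toPoly_mem_idealOfVars Ψ i)) (fun _ => Ideal.zero_mem _)).1 hΨ i
  have mem_pow (d : ℕ) (hd : d ≤ k + 1) (i : Fin w) : toPoly Ψ i ∈ idealOfVars (Fin u) ℂ ^ d := by
    induction d with
    | zero => simp
    | succ d ih =>
      have := aeval_sub_self_mem_idealOfVars_pow (toPoly_sub_X_mem_of_linPart_eq_one hα)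
        (ih (by omega))
      simpa using Ideal.sub_mem _ (Ideal.pow_le_pow_right hd (aeval_mem i)) this
  calc Ψ = jetOfPoly k (toPoly Ψ) := (jetOfPoly_toPoly Ψ).symm
    _ = jetOfPoly k 0 := (jetOfPoly_eq_iff (toPoly_mem_idealOfVars Ψ)
        (fun _ => Ideal.zero_mem _)).2 (by simpa using mem_pow (k + 1) le_rfl)
    _ = 0 := rfl

lemma exists_jetComp_eq_idJet_of_linPart_eq_one {α : Jet k u u} (hα : linPart α = 1) :
    ∃ β : Jet k u u, jetComp β α = idJet k u :=
  LinearMap.injective_iff_surjective.1 (precomp_injective_of_linPart_eq_one hα) (idJet k u)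

lemma jetComp_left_cancel_of_linPart_eq_one {α : Jet k v v} (hα : linPart α = 1)
    {γ γ' : Jet k u v} (h : jetComp α γ = jetComp α γ') : γ = γ' := by
  obtain ⟨β, hβ⟩ := exists_jetComp_eq_idJet_of_linPart_eq_one hα
  rw [← idJet_jetComp γ, ← idJet_jetComp γ', ← hβ, jetComp_assoc, jetComp_assoc, h]

end LinearPart

section Regular

variable {k p n N : ℕ}

lemma mem_jetReg_iff_exists_jetComp_eq_idJet (hk : 1 ≤ k) {γ : Jet k p n} :
    γ ∈ JetReg k p n ↔ ∃ L : Jet k n p, jetComp L γ = idJet k p := by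
  constructor
  · intro hγ
    obtain ⟨B, hB⟩ := exists_matrix_mul_eq_one (A := linPart γ)
      (Eq.trans hγ (Fintype.card_fin p).symm)
    obtain ⟨β, hβ⟩ := exists_jetComp_eq_idJet_of_linPart_eq_one
      (α := jetComp (linJet k B) γ) (by rw [linPart_jetComp hk, linPart_linJet hk, hB])
    exact ⟨jetComp β (linJet k B), by rw [jetComp_assoc, hβ]⟩
  · rintro ⟨L, hL⟩
    have rank_le := Matrix.rank_mul_le_right (linPart L) (linPart γ)
    rw [← linPart_jetComp hk, hL, linPart_idJet hk, Matrix.rank_one, Fintype.card_fin] at rank_le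
    exact le_antisymm (linPart γ).rank_le_width rank_le

lemma precomp_surjective (hk : 1 ≤ k) {γ : Jet k p n} (hγ : γ ∈ JetReg k p n) :
    Function.Surjective (precomp N γ) := by
  obtain ⟨L, hL⟩ := (mem_jetReg_iff_exists_jetComp_eq_idJet hk).1 hγ
  exact fun Φ => ⟨jetComp Φ L, by rw [precomp_apply, jetComp_assoc, hL, jetComp_idJet]⟩

lemma precomp_injective (hk : 1 ≤ k) {φ : Jet k p p} (hφ : φ ∈ JetReg k p p) :
    Function.Injective (precomp N φ) :=
  LinearMap.injective_iff_surjective.2 (precomp_surjective hk hφ)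

end Regular

section SolutionSpace

variable {k p n N : ℕ}

/-- The solution space `S_γ = {Ψ ∈ J_k(n,N) : Ψ ∘ γ = 0}`. -/
noncomputable def solutionSpace (N : ℕ) (γ : Jet k p n) : Submodule ℂ (Jet k n N) :=
  LinearMap.ker (precomp N γ)

lemma mem_solutionSpace {γ : Jet k p n} {Ψ : Jet k n N} :
    Ψ ∈ solutionSpace N γ ↔ jetComp Ψ γ = 0 := Iff.rfl

lemma card_mon (hp : 1 ≤ p) : Fintype.card (Mon p k) = symLe p k := by
  classical
  let s : Finset (Fin p →₀ ℕ) := (Finset.Icc 1 k).biUnion (Finset.univ.finsuppAntidiag ·)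
  have mem_s (d : Fin p →₀ ℕ) : d ∈ s ↔ 0 < ∑ i, d i ∧ ∑ i, d i ≤ k := by
    simp [s, Finset.mem_finsuppAntidiag, Nat.succ_le_iff]
  let e : Mon p k ≃ s :=
    Finsupp.equivFunOnFinite.symm.subtypeEquiv fun m =>
      (mem_s (Finsupp.equivFunOnFinite.symm m)).symm
  have disjoint_of_ne : Set.PairwiseDisjoint (Finset.Icc 1 k : Set ℕ)
      ((Finset.univ : Finset (Fin p)).finsuppAntidiag ·) := by
    intro i _ j _ hij
    refine Finset.disjoint_left.2 fun d hi hj => hij ?_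
    rw [Finset.mem_finsuppAntidiag] at hi hj
    exact hi.1.symm.trans hj.1
  rw [Fintype.card_congr e, Fintype.card_coe, Finset.card_biUnion disjoint_of_ne]
  refine Finset.sum_congr rfl fun i _ => ?_
  rw [Finset.card_finsuppAntidiag_nat_eq_choose, Finset.card_univ, Fintype.card_fin]
  exact Nat.choose_symm_of_eq_add (by omega)

theorem finrank_quotient_solutionSpace (hp : 1 ≤ p) (hk : 1 ≤ k) {γ : Jet k p n}
    (hγ : γ ∈ JetReg k p n) :
    Module.finrank ℂ (Jet k n N ⧸ solutionSpace N γ) = N * symLe p k := by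
  rw [solutionSpace,
    ((precomp N γ).quotKerEquivOfSurjective (precomp_surjective hk hγ)).finrank_eq,
    Module.finrank_pi_fintype]
  simp [card_mon hp]

lemma exists_mem_solutionSpace_linPart_eq (hk : 1 ≤ k) {γ : Jet k p n} (hγ : γ ∈ JetReg k p n)
    {A : Matrix (Fin N) (Fin n) ℂ} (hA : A * linPart γ = 0) :
    ∃ Ψ ∈ solutionSpace N γ, linPart Ψ = A := by
  obtain ⟨L, hL⟩ := (mem_jetReg_iff_exists_jetComp_eq_idJet hk).1 hγ
  refine ⟨linJet k A - jetComp (jetComp (linJet k A) γ) L, ?_, ?_⟩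
  · rw [mem_solutionSpace, sub_jetComp, jetComp_assoc _ L, hL, jetComp_idJet, sub_self]
  · rw [linPart_sub, linPart_jetComp hk, linPart_jetComp hk, linPart_linJet hk, hA,
      Matrix.zero_mul, sub_zero]

lemma linPart_mul_linPart_eq_zero (hk : 1 ≤ k) {γ : Jet k p n} {Ψ : Jet k n N}
    (hΨ : Ψ ∈ solutionSpace N γ) : linPart Ψ * linPart γ = 0 := by
  rw [← linPart_jetComp hk, mem_solutionSpace.1 hΨ, linPart_zero]

lemma rank_linPart_add_kerDim (Ψ : Jet k n N) : (linPart Ψ).rank + kerDim Ψ = n :=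
  (linPart Ψ).mulVecLin.finrank_range_add_finrank_ker.trans (Module.finrank_fin_fun ℂ)

lemma kerDim_eq_of_le_rank_add (hk : 1 ≤ k) {γ : Jet k p n} (hγ : γ ∈ JetReg k p n)
    {Ψ : Jet k n N} (hΨ : Ψ ∈ solutionSpace N γ) (h : n ≤ (linPart Ψ).rank + p) :
    kerDim Ψ = p := by
  have rank_add_rank_le :=
    Matrix.rank_add_rank_le_card_of_mul_eq_zero (linPart_mul_linPart_eq_zero hk hΨ)
  have rank_add_kerDim := rank_linPart_add_kerDim Ψ
  rw [show (linPart γ).rank = p from hγ, Fintype.card_fin] at rank_add_rank_le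
  omega

theorem solutionSpace_subset_closure_inter_kerDim_eq (hk : 1 ≤ k) (hN : n ≤ N + p)
    {γ : Jet k p n} (hγ : γ ∈ JetReg k p n) :
    (solutionSpace N γ : Set (Jet k n N)) ⊆
      closure (solutionSpace N γ ∩ {Ψ : Jet k n N | kerDim Ψ = p}) := by
  intro Ψ hΨ
  have rank_γ : (linPart γ).rank = p := hγ
  obtain ⟨A, mul_eq_zero, rank_add⟩ := exists_matrix_mul_eq_zero_and_rank_add_rank_eq
    (l := Fin N) (linPart γ) (by simpa [rank_γ] using hN)
  rw [rank_γ, Fintype.card_fin] at rank_add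
  obtain ⟨Ψ₀, hΨ₀, rfl⟩ := exists_mem_solutionSpace_linPart_eq hk hγ mul_eq_zero
  have dense_good :=
    (finite_setOf_rank_add_smul_lt (linPart Ψ) (linPart Ψ₀)).countable.dense_compl ℂ
  have perturb_continuous : Continuous fun t : ℂ => Ψ + t • Ψ₀ := by fun_prop
  suffices maps_to : Set.MapsTo (fun t : ℂ => Ψ + t • Ψ₀)
      {t | (linPart Ψ + t • linPart Ψ₀).rank < (linPart Ψ₀).rank}ᶜ
      (solutionSpace N γ ∩ {Ψ : Jet k n N | kerDim Ψ = p}) by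
    simpa using map_mem_closure perturb_continuous (dense_good 0) maps_to
  intro t ht
  have perturb_mem : Ψ + t • Ψ₀ ∈ solutionSpace N γ :=
    add_mem hΨ (Submodule.smul_mem _ t hΨ₀)
  refine ⟨perturb_mem, kerDim_eq_of_le_rank_add hk hγ perturb_mem ?_⟩
  rw [linPart_add, linPart_smul]
  exact rank_add.ge.trans (Nat.add_le_add_right (not_lt.1 ht) p)

lemma ker_linPart_eq_range_of_kerDim_eq (hk : 1 ≤ k) {γ : Jet k p n} (hγ : γ ∈ JetReg k p n)
    {Ψ : Jet k n N} (hΨ : Ψ ∈ solutionSpace N γ) (h : kerDim Ψ = p) :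
    LinearMap.ker (linPart Ψ).mulVecLin = LinearMap.range (linPart γ).mulVecLin := by
  refine (Submodule.eq_of_le_of_finrank_eq (LinearMap.range_le_ker_iff.2 ?_) ?_).symm
  · rw [← Matrix.mulVecLin_mul, linPart_mul_linPart_eq_zero hk hΨ, Matrix.mulVecLin_zero]
  · exact Eq.trans hγ h.symm

lemma exists_linPart_linJet_jetComp_add_eq_one (hk : 1 ≤ k) {γ : Jet k p n}
    (hγ : γ ∈ JetReg k p n) {L : Jet k n p} (hL : jetComp L γ = idJet k p) {Ψ : Jet k n N}
    (hΨ : Ψ ∈ solutionSpace N γ) (h : kerDim Ψ = p) :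
    ∃ C, linPart (jetComp (linJet k C) Ψ + jetComp γ L) = 1 := by
  have linPart_mul : linPart L * linPart γ = 1 := by
    rw [← linPart_jetComp hk, hL, linPart_idJet hk]
  have ker_le : LinearMap.ker (linPart Ψ).mulVecLin ≤
      LinearMap.ker (1 - linPart γ * linPart L).mulVecLin := by
    rw [ker_linPart_eq_range_of_kerDim_eq hk hγ hΨ h, LinearMap.range_le_ker_iff,
      ← Matrix.mulVecLin_mul, Matrix.sub_mul, Matrix.mul_assoc, linPart_mul, Matrix.one_mul,
      Matrix.mul_one, sub_self, Matrix.mulVecLin_zero]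
  obtain ⟨C, hC⟩ := exists_matrix_mul_eq_of_ker_le_ker ker_le
  refine ⟨C, ?_⟩
  rw [linPart_add, linPart_jetComp hk, linPart_jetComp hk, linPart_linJet hk, hC, sub_add_cancel]

theorem exists_reparametrization (hk : 1 ≤ k) {Ψ : Jet k n N} (h : kerDim Ψ = p)
    {γ₁ γ₂ : Jet k p n} (hγ₁ : γ₁ ∈ JetReg k p n) (hγ₂ : γ₂ ∈ JetReg k p n)
    (hΨ₁ : Ψ ∈ solutionSpace N γ₁) (hΨ₂ : Ψ ∈ solutionSpace N γ₂) :
    ∃ φ ∈ JetReg k p p, γ₁ = jetComp γ₂ φ := by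
  obtain ⟨L₁, hL₁⟩ := (mem_jetReg_iff_exists_jetComp_eq_idJet hk).1 hγ₁
  obtain ⟨L₂, hL₂⟩ := (mem_jetReg_iff_exists_jetComp_eq_idJet hk).1 hγ₂
  obtain ⟨C, hC⟩ := exists_linPart_linJet_jetComp_add_eq_one hk hγ₂ hL₂ hΨ₂ h
  have γ₁_eq : γ₁ = jetComp γ₂ (jetComp L₂ γ₁) := by
    refine jetComp_left_cancel_of_linPart_eq_one hC ?_
    have comp_γ₂ :
        jetComp (jetComp (linJet k C) Ψ + jetComp γ₂ L₂) γ₂ = γ₂ := by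
      rw [add_jetComp, jetComp_assoc, mem_solutionSpace.1 hΨ₂, jetComp_zero, zero_add,
        jetComp_assoc, hL₂, jetComp_idJet]
    rw [← jetComp_assoc, comp_γ₂, add_jetComp, jetComp_assoc, mem_solutionSpace.1 hΨ₁,
      jetComp_zero, zero_add, jetComp_assoc]
  refine ⟨jetComp L₂ γ₁, (mem_jetReg_iff_exists_jetComp_eq_idJet hk).2 ⟨jetComp L₁ γ₂, ?_⟩, γ₁_eq⟩
  rw [jetComp_assoc, ← γ₁_eq, hL₁]

lemma solutionSpace_jetComp (hk : 1 ≤ k) (γ : Jet k p n) {φ : Jet k p p}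
    (hφ : φ ∈ JetReg k p p) : solutionSpace N (jetComp γ φ) = solutionSpace N γ := by
  ext Ψ
  rw [mem_solutionSpace, mem_solutionSpace, ← jetComp_assoc, ← precomp_apply φ,
    map_eq_zero_iff _ (precomp_injective hk hφ)]

theorem solutionSpace_eq_iff (hk : 1 ≤ k) (hN : n ≤ N + p) {γ₁ γ₂ : Jet k p n}
    (hγ₁ : γ₁ ∈ JetReg k p n) (hγ₂ : γ₂ ∈ JetReg k p n) :
    solutionSpace N γ₁ = solutionSpace N γ₂ ↔ ∃ φ ∈ JetReg k p p, γ₁ = jetComp γ₂ φ := by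
  refine ⟨fun h => ?_, by rintro ⟨φ, hφ, rfl⟩; exact solutionSpace_jetComp hk γ₂ hφ⟩
  obtain ⟨Ψ, hΨ, kerDim_eq⟩ := closure_nonempty_iff.1
    ⟨0, solutionSpace_subset_closure_inter_kerDim_eq hk hN hγ₁ (zero_mem _)⟩
  exact exists_reparametrization hk kerDim_eq hγ₁ hγ₂ hΨ (h ▸ hΨ)

end SolutionSpace

theorem solution_space_properties_general (p n k N : ℕ) (hp : 1 ≤ p) (hk : 1 ≤ k)
    (hN : n ≤ N + p) :
    (∀ γ ∈ JetReg k p n,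
      ∃ S : Submodule ℂ (Jet k n N),
        (S : Set (Jet k n N)) = {Ψ : Jet k n N | jetComp Ψ γ = 0} ∧
        Module.finrank ℂ (Jet k n N ⧸ S) = N * symLe p k) ∧
    (∀ γ ∈ JetReg k p n,
      {Ψ : Jet k n N | jetComp Ψ γ = 0} ⊆
        closure ({Ψ : Jet k n N | jetComp Ψ γ = 0} ∩ {Ψ : Jet k n N | kerDim Ψ = p})) ∧
    (∀ Ψ : Jet k n N, kerDim Ψ = p →
      ∀ γ₁ ∈ JetReg k p n, ∀ γ₂ ∈ JetReg k p n,
        jetComp Ψ γ₁ = 0 → jetComp Ψ γ₂ = 0 →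
          ∃ φ ∈ JetReg k p p, γ₁ = jetComp γ₂ φ) ∧
    (∀ γ₁ ∈ JetReg k p n, ∀ γ₂ ∈ JetReg k p n,
      ({Ψ : Jet k n N | jetComp Ψ γ₁ = 0} = {Ψ : Jet k n N | jetComp Ψ γ₂ = 0} ↔
        ∃ φ ∈ JetReg k p p, γ₁ = jetComp γ₂ φ)) := by
  refine ⟨fun γ hγ => ⟨solutionSpace N γ, rfl, finrank_quotient_solutionSpace hp hk hγ⟩,
    fun γ hγ => solutionSpace_subset_closure_inter_kerDim_eq hk hN hγ,
    fun Ψ hΨ γ₁ hγ₁ γ₂ hγ₂ => exists_reparametrization hk hΨ hγ₁ hγ₂,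
    fun γ₁ hγ₁ γ₂ hγ₂ => ?_⟩
  exact SetLike.coe_set_eq.trans (solutionSpace_eq_iff hk hN hγ₁ hγ₂)

/-- The basic properties of the solution spaces
`S_γ = {Ψ ∈ J_k(n,N) : Ψ ∘ γ = 0}` for regular `p`-dimensional jets `γ ∈ J_k^{reg}(p,n)`:
(i) `S_γ` is a linear subspace of codimension `N·sym^{≤k}(p)`;
(ii) `S_γ ∩ J_k^o(n,N)` is dense in `S_γ`;
(iii) a `Ψ ∈ J_k^o(n,N)` belongs to at most one `S_γ`, up to reparametrization;
(iv) `S_{γ₁} = S_{γ₂}` iff `γ₁ = γ₂ ∘ φ` for some `φ ∈ J_k^{reg}(p,p)`. -/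
theorem solution_space_properties (p n k N : ℕ) (hp : 1 ≤ p) (hpn : p ≤ n) (hk : 1 ≤ k)
    (hN : n ≤ N) :
    (∀ γ ∈ JetReg k p n,
      ∃ S : Submodule ℂ (Jet k n N),
        (S : Set (Jet k n N)) = {Ψ : Jet k n N | jetComp Ψ γ = 0} ∧
        Module.finrank ℂ (Jet k n N ⧸ S) = N * symLe p k) ∧
    (∀ γ ∈ JetReg k p n,
      {Ψ : Jet k n N | jetComp Ψ γ = 0} ⊆
        closure ({Ψ : Jet k n N | jetComp Ψ γ = 0} ∩ {Ψ : Jet k n N | kerDim Ψ = p})) ∧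
    (∀ Ψ : Jet k n N, kerDim Ψ = p →
      ∀ γ₁ ∈ JetReg k p n, ∀ γ₂ ∈ JetReg k p n,
        jetComp Ψ γ₁ = 0 → jetComp Ψ γ₂ = 0 →
          ∃ φ ∈ JetReg k p p, γ₁ = jetComp γ₂ φ) ∧
    (∀ γ₁ ∈ JetReg k p n, ∀ γ₂ ∈ JetReg k p n,
      ({Ψ : Jet k n N | jetComp Ψ γ₁ = 0} = {Ψ : Jet k n N | jetComp Ψ γ₂ = 0} ↔
        ∃ φ ∈ JetReg k p p, γ₁ = jetComp γ₂ φ)) :=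
  solution_space_properties_general p n k N hp hk (hN.trans (Nat.le_add_right N p))

end JetPaper
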